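/- Under the stated assumptions on the family Q(t,·), let r̄ ∈ ℝ, A ∈ ℝ^{2×2}_sym, U ∈ ℝ^{3×3}_sym, and let U' ∈ ℝ^{2×2}_sym denote the upper-left 2×2 block of U. Let (Â, M̂) be the unique minimizer over ℝ^{2×2}_sym × ℝ^{2×2}_sym of (A', M') ↦ ∫_{−1/2}^{1/2} Q₂( t, 𝟙(t>0)·(r̄/2)·U' − (t·A' + M') ) dt (so that Â = r̄·𝔹(U') in the notation of the paper). Then the infimum, taken over all M ∈ ℝ^{2×2}_sym and all measurable d : (−1/2,1/2) → ℝ³ with ∫_{−1/2}^{1/2}|d(t)|² dt < ∞, of ∫_{−1/2}^{1/2} Q( t, ι(t·A + M) + 𝟙(t>0)·(r̄/2)·U + sym(d(t)⊗e₃) ) dt equals Q_el(A + Â) + r̄²·E_res(U'), and this infimum is attained. -/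

import Mathlib

/-!
Every matrix in the functional is symmetric, and a symmetric `U` splits as `ι(U') + sym (u ⊗ e₃)`,
so the off-plane part of `𝟙(t>0)·(r̄/2)·U` only shifts the free column `d`. For fixed `t` the form
`Q(t,·)` is positive definite in `d`, hence the pointwise minimizer is `d = optCol b t B`, the
solution of the normal equations. It is linear in `B`, measurable in `t` (Cramer's rule), and
bounded by a multiple of `|B|`, so it is admissible; thus minimizing over `d` replaces `Q` by `Q₂`
(`IsFam.split`, `IsFam.Q2_eq`, `IsFam.optCol_bound`).

What remains is a finite-dimensional problem: `∫ Q₂(t, t·A + M + 𝟙(t>0)·S) dt` is a positive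
semidefinite quadratic form in `(A, M, S)` with polar form `IsFam.energy`. With `S = (r̄/2)·U'`, the
minimality of `(Â, M̂)` says that `R = (-Â, -M̂, S)` is orthogonal to all affine symmetric profiles
`(A', M', 0)` (`IsFam.orth_of_min`), so by Pythagoras the energy of `(A, M, S)` is that of
`(A + Â, M + M̂, 0)` plus that of `R`. Minimizing the first summand over `M` gives `Q_el(A + Â)`,
attained by `IsFam.exists_opt_const`; the second equals `r̄² E_res(U')` by homogeneity.
-/


open MeasureTheory Matrix Filter Topology

noncomputable section

/-- 2×2 real matrices. -/
abbrev M2 : Type := Matrix (Fin 2) (Fin 2) ℝ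
/-- 3×3 real matrices. -/
abbrev M3 : Type := Matrix (Fin 3) (Fin 3) ℝ

/-- squared Frobenius norm of a 2×2 matrix -/
def frobSq2 (A : M2) : ℝ := ∑ i, ∑ j, (A i j) ^ 2

/-- squared Frobenius norm of a 3×3 matrix -/
def frobSq3 (A : M3) : ℝ := ∑ i, ∑ j, (A i j) ^ 2

/-- symmetric part of a matrix: `sym G = (G + Gᵀ)/2` -/
def symPart (G : M3) : M3 := (1 / 2 : ℝ) • (G + Gᵀ)

/-- `ι A` : the 3×3 matrix with upper-left 2×2 block `A` and zeros elsewhere -/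
def iota (A : M2) : M3 :=
  Matrix.of fun i j =>
    if hi : (i : ℕ) < 2 then (if hj : (j : ℕ) < 2 then A ⟨i, hi⟩ ⟨j, hj⟩ else 0) else 0

/-- `d ⊗ e₃` : the 3×3 matrix whose third column is `d` and whose other entries vanish -/
def tensorE3 (d : Fin 3 → ℝ) : M3 :=
  Matrix.of fun i j => if j = (2 : Fin 3) then d i else 0

/-- the reduced quadratic form `Q₂(t,B) = inf_{d∈ℝ³} Q(t, ι(B) + sym(d⊗e₃))` -/
def Q2fam (Q : ℝ → M3 → ℝ) (t : ℝ) (B : M2) : ℝ :=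
  ⨅ d : Fin 3 → ℝ, Q t (iota B + symPart (tensorE3 d))

/-- the effective bending stiffness
`Q_el(A) = inf_{M symmetric} ∫_{−1/2}^{1/2} Q₂(t, t·A + M) dt` -/
def Qel (Q : ℝ → M3 → ℝ) (A : M2) : ℝ :=
  ⨅ M : {M : M2 // M.IsSymm},
    ∫ t in Set.Ioo (-(1 : ℝ) / 2) (1 / 2), Q2fam Q t (t • A + M.val)

/-- the residual energy
`E_res(U) = inf_{A,M symmetric} ∫_{−1/2}^{1/2} Q₂(t, t·A + M + 𝟙(t>0)·(1/2)U) dt` -/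
def Eres (Q : ℝ → M3 → ℝ) (U : M2) : ℝ :=
  ⨅ p : {M : M2 // M.IsSymm} × {M : M2 // M.IsSymm},
    ∫ t in Set.Ioo (-(1 : ℝ) / 2) (1 / 2),
      Q2fam Q t (t • p.1.val + p.2.val + (if 0 < t then (1 : ℝ) else 0) • ((1 / 2 : ℝ) • U))

/-- the upper-left 2×2 block of a 3×3 matrix -/
def upLeft (U : M3) : M2 :=
  Matrix.of fun i j =>
    U (Fin.castLE (by norm_num : (2 : ℕ) ≤ 3) i) (Fin.castLE (by norm_num : (2 : ℕ) ≤ 3) j)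

section Relaxation

/-! ### The third-column map and the block decomposition -/

/-- The linear map `d ↦ sym (d ⊗ e₃)`. -/
def colMap : (Fin 3 → ℝ) →ₗ[ℝ] M3 where
  toFun d := symPart (tensorE3 d)
  map_add' d e := by
    ext i j; fin_cases i <;> fin_cases j <;> simp [symPart, tensorE3] <;> ring
  map_smul' c d := by
    ext i j; fin_cases i <;> fin_cases j <;> simp [symPart, tensorE3] <;> ring

/-- `iota` as a linear map. -/
def iotaL : M2 →ₗ[ℝ] M3 where
  toFun := iota
  map_add' A B := by ext i j; fin_cases i <;> fin_cases j <;> simp [iota]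
  map_smul' c A := by ext i j; fin_cases i <;> fin_cases j <;> simp [iota]

lemma frobSq3_block (B : M2) (d : Fin 3 → ℝ) :
    frobSq3 (symPart (iotaL B + colMap d)) =
      B 0 0 ^ 2 + B 1 1 ^ 2 + (B 0 1 + B 1 0) ^ 2 / 2 + (d 0 ^ 2 + d 1 ^ 2) / 2 + d 2 ^ 2 := by
  simp [frobSq3, symPart, iotaL, iota, colMap, tensorE3, Fin.sum_univ_three]
  ring

lemma frobSq3_block_le (B : M2) (d : Fin 3 → ℝ) :
    frobSq3 (symPart (iotaL B + colMap d)) ≤ frobSq2 B + ∑ i, d i ^ 2 := by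
  rw [frobSq3_block]
  simp only [frobSq2, Fin.sum_univ_two, Fin.sum_univ_three]
  nlinarith [sq_nonneg (B 0 1 - B 1 0), sq_nonneg (d 0), sq_nonneg (d 1)]

lemma frobSq3_block_ge_col (B : M2) (d : Fin 3 → ℝ) :
    (1 / 2) * ∑ i, d i ^ 2 ≤ frobSq3 (symPart (iotaL B + colMap d)) := by
  rw [frobSq3_block]
  simp only [Fin.sum_univ_three]
  nlinarith [sq_nonneg (B 0 1 + B 1 0), sq_nonneg (B 0 0), sq_nonneg (B 1 1), sq_nonneg (d 2)]

lemma frobSq3_block_ge_symm (B : M2) (hB : B.IsSymm) (d : Fin 3 → ℝ) :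
    frobSq2 B ≤ frobSq3 (symPart (iotaL B + colMap d)) := by
  rw [frobSq3_block]
  have h : B 1 0 = B 0 1 := hB.apply 0 1
  simp only [frobSq2, Fin.sum_univ_two, h]
  nlinarith [sq_nonneg (d 0), sq_nonneg (d 1), sq_nonneg (d 2)]

lemma frobSq2_nonneg (B : M2) : 0 ≤ frobSq2 B :=
  Finset.sum_nonneg fun _ _ => Finset.sum_nonneg fun _ _ => sq_nonneg _

lemma frobSq3_nonneg (B : M3) : 0 ≤ frobSq3 B :=
  Finset.sum_nonneg fun _ _ => Finset.sum_nonneg fun _ _ => sq_nonneg _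

lemma eq_zero_of_frobSq2 (B : M2) (h : frobSq2 B ≤ 0) : B = 0 := by
  simp only [frobSq2, Fin.sum_univ_two] at h
  ext i j
  have := sq_nonneg (B 0 0)
  have := sq_nonneg (B 0 1)
  have := sq_nonneg (B 1 0)
  have := sq_nonneg (B 1 1)
  have : B i j ^ 2 = 0 := by fin_cases i <;> fin_cases j <;> simp <;> nlinarith
  simpa using this

/-- The vector `u` with `U = ι(U') + sym (u ⊗ e₃)` for symmetric `U`. -/
def lastCol (U : M3) : Fin 3 → ℝ := ![2 * U 0 2, 2 * U 1 2, U 2 2]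

lemma symm_block (U : M3) (hU : U.IsSymm) : U = iotaL (upLeft U) + colMap (lastCol U) := by
  have h1 : U 2 0 = U 0 2 := hU.apply 0 2
  have h2 : U 2 1 = U 1 2 := hU.apply 1 2
  ext i j
  fin_cases i <;> fin_cases j <;>
    simp [iotaL, colMap, iota, upLeft, symPart, tensorE3, lastCol, h1, h2] <;> ring

/-! ### Pointwise minimization over the third column -/

/-- The hypotheses on the family `Q(t,·)`, with a choice `b t` of the polar form of `Q(t,·)`. -/
structure IsFam (CW : ℝ) (Q : ℝ → M3 → ℝ) (b : ℝ → M3 →ₗ[ℝ] M3 →ₗ[ℝ] ℝ) : Prop where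
  pos : 0 < CW
  symm : ∀ t u v, b t u v = b t v u
  eq : ∀ t G, Q t G = b t G G
  meas : ∀ G, Measurable fun t => Q t G
  bound : ∀ t ∈ Set.Ioo (-(1 : ℝ) / 2) (1 / 2), ∀ G : M3,
      (1 / CW) * frobSq3 (symPart G) ≤ Q t G ∧ Q t G ≤ CW * frobSq3 (symPart G)

/-- The Gram matrix of `b t` on the space of matrices `sym (d ⊗ e₃)`. -/
def colGram (b : ℝ → M3 →ₗ[ℝ] M3 →ₗ[ℝ] ℝ) (t : ℝ) : M3 :=
  Matrix.of fun i j => b t (colMap (Pi.single i 1)) (colMap (Pi.single j 1))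

/-- The optimal third column for the in-plane matrix `B`, as a linear map of `B`: the solution `d`
of the normal equations `b t (sym (eᵢ ⊗ e₃)) (ι B + sym (d ⊗ e₃)) = 0`. It is written with the
matrix inverse so that measurability in `t` can be read off. -/
def optCol (b : ℝ → M3 →ₗ[ℝ] M3 →ₗ[ℝ] ℝ) (t : ℝ) : M2 →ₗ[ℝ] (Fin 3 → ℝ) :=
  -((colGram b t)⁻¹.mulVecLin ∘ₗ
    (LinearMap.pi fun i => b t (colMap (Pi.single i 1)) ∘ₗ iotaL))

/-- The optimal extension `B ↦ ι B + sym (d ⊗ e₃)`, with `d = optCol b t B`. -/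
def optExt (b : ℝ → M3 →ₗ[ℝ] M3 →ₗ[ℝ] ℝ) (t : ℝ) : M2 →ₗ[ℝ] M3 :=
  iotaL + colMap ∘ₗ optCol b t

lemma colMap_eq_sum (d : Fin 3 → ℝ) :
    colMap d = ∑ i, d i • colMap (Pi.single i (1 : ℝ)) := by
  conv_lhs => rw [pi_eq_sum_univ' d]
  simp only [map_sum, map_smul]

variable {CW : ℝ} {Q : ℝ → M3 → ℝ} {b : ℝ → M3 →ₗ[ℝ] M3 →ₗ[ℝ] ℝ}

lemma gram_mulVec (t : ℝ) (d : Fin 3 → ℝ) (i : Fin 3) :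
    (colGram b t *ᵥ d) i = b t (colMap (Pi.single i 1)) (colMap d) := by
  rw [colMap_eq_sum d]
  simp only [map_sum, map_smul, Matrix.mulVec, dotProduct, colGram, Matrix.of_apply, smul_eq_mul]
  exact Finset.sum_congr rfl fun _ _ => mul_comm _ _

namespace IsFam

lemma nonneg (h : IsFam CW Q b) {t : ℝ} (ht : t ∈ Set.Ioo (-(1 : ℝ) / 2) (1 / 2)) (G : M3) :
    0 ≤ Q t G :=
  (mul_nonneg (one_div_pos.2 h.pos).le (frobSq3_nonneg _)).trans (h.bound t ht G).1

lemma gram_det (h : IsFam CW Q b) {t : ℝ} (ht : t ∈ Set.Ioo (-(1 : ℝ) / 2) (1 / 2)) :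
    (colGram b t).det ≠ 0 := by
  intro h0
  obtain ⟨d, hd, hd0⟩ := Matrix.exists_mulVec_eq_zero_iff.2 h0
  apply hd
  have hQ : Q t (colMap d) = 0 := by
    rw [h.eq]
    have hz : ∀ i, b t (colMap (Pi.single i 1)) (colMap d) = 0 := by
      intro i; rw [← gram_mulVec, hd0]; rfl
    have hsum : ∀ G, (∀ i, b t (colMap (Pi.single i 1)) G = 0) → b t (colMap d) G = 0 := by
      intro G hG
      rw [colMap_eq_sum d]
      simp [map_sum, LinearMap.sum_apply, hG]
    exact hsum _ hz
  have h1 := (h.bound t ht (colMap d)).1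
  have h2 := frobSq3_block_ge_col 0 d
  rw [map_zero, zero_add] at h2
  rw [hQ] at h1
  have h3 : frobSq3 (symPart (colMap d)) ≤ 0 := by
    by_contra hc
    exact absurd h1 (not_le.2 (mul_pos (one_div_pos.2 h.pos) (not_le.1 hc)))
  have h4 : ∑ i, d i ^ 2 = 0 :=
    le_antisymm (by linarith) (Finset.sum_nonneg fun _ _ => sq_nonneg _)
  funext i
  have := (Finset.sum_eq_zero_iff_of_nonneg (fun i _ => sq_nonneg (d i))).1 h4 i (Finset.mem_univ i)
  simpa using this

lemma orth (h : IsFam CW Q b) {t : ℝ} (ht : t ∈ Set.Ioo (-(1 : ℝ) / 2) (1 / 2)) (B : M2)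
    (d : Fin 3 → ℝ) : b t (colMap d) (optExt b t B) = 0 := by
  have key : ∀ i, b t (colMap (Pi.single i 1)) (optExt b t B) = 0 := by
    intro i
    have hdet : IsUnit (colGram b t).det := isUnit_iff_ne_zero.2 (h.gram_det ht)
    have h1 := gram_mulVec (b := b) t (optCol b t B) i
    have h2 : colGram b t *ᵥ (optCol b t B)
        = -(fun i => b t (colMap (Pi.single i 1)) (iotaL B)) := by
      simp only [optCol, LinearMap.neg_apply, LinearMap.comp_apply, Matrix.mulVecLin_apply,
        Matrix.mulVec_neg, Matrix.mulVec_mulVec, Matrix.mul_nonsing_inv _ hdet, Matrix.one_mulVec]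
      rfl
    rw [h2] at h1
    simp only [optExt, LinearMap.add_apply, LinearMap.comp_apply, map_add, ← h1]
    simp
  rw [colMap_eq_sum]
  simp [map_sum, LinearMap.sum_apply, key]

/-- Completing the square in the third column. -/
lemma split (h : IsFam CW Q b) {t : ℝ} (ht : t ∈ Set.Ioo (-(1 : ℝ) / 2) (1 / 2)) (B : M2)
    (d : Fin 3 → ℝ) :
    Q t (iotaL B + colMap d) = Q t (optExt b t B) + Q t (colMap (d - optCol b t B)) := by
  have e : iotaL B + colMap d = optExt b t B + colMap (d - optCol b t B) := by
    simp [optExt]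
  have o := h.orth ht B (d - optCol b t B)
  have o' := h.symm t (optExt b t B) (colMap (d - optCol b t B))
  rw [e, h.eq, h.eq, h.eq, LinearMap.map_add₂, map_add, map_add, o', o]
  ring

lemma opt_le (h : IsFam CW Q b) {t : ℝ} (ht : t ∈ Set.Ioo (-(1 : ℝ) / 2) (1 / 2)) (B : M2)
    (d : Fin 3 → ℝ) : Q t (optExt b t B) ≤ Q t (iotaL B + colMap d) := by
  rw [h.split ht]
  linarith [h.nonneg ht (colMap (d - optCol b t B))]

lemma Q2_eq (h : IsFam CW Q b) {t : ℝ} (ht : t ∈ Set.Ioo (-(1 : ℝ) / 2) (1 / 2)) (B : M2) :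
    Q2fam Q t B = Q t (optExt b t B) := by
  apply le_antisymm
  · exact ciInf_le (f := fun d : Fin 3 → ℝ => Q t (iota B + symPart (tensorE3 d)))
      ⟨0, by rintro _ ⟨d, rfl⟩; exact h.nonneg ht _⟩ (optCol b t B)
  · exact le_ciInf fun d => h.opt_le ht B d

lemma opt_upper (h : IsFam CW Q b) {t : ℝ} (ht : t ∈ Set.Ioo (-(1 : ℝ) / 2) (1 / 2)) (B : M2) :
    Q t (optExt b t B) ≤ CW * frobSq2 B := by
  refine (h.opt_le ht B 0).trans ((h.bound t ht _).2.trans ?_)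
  have := frobSq3_block_le B 0
  simp only [Pi.zero_apply, ne_eq, OfNat.ofNat_ne_zero, not_false_eq_true, zero_pow,
    Finset.sum_const_zero, add_zero] at this
  exact mul_le_mul_of_nonneg_left this h.pos.le

lemma opt_lower (h : IsFam CW Q b) {t : ℝ} (ht : t ∈ Set.Ioo (-(1 : ℝ) / 2) (1 / 2)) (B : M2)
    (hB : B.IsSymm) : (1 / CW) * frobSq2 B ≤ Q t (optExt b t B) :=
  (mul_le_mul_of_nonneg_left (frobSq3_block_ge_symm B hB _) (one_div_pos.2 h.pos).le).trans
    (h.bound t ht _).1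

lemma optCol_bound (h : IsFam CW Q b) {t : ℝ} (ht : t ∈ Set.Ioo (-(1 : ℝ) / 2) (1 / 2)) (B : M2) :
    ∑ i, optCol b t B i ^ 2 ≤ 2 * CW ^ 2 * frobSq2 B := by
  have h1 := h.opt_upper ht B
  have h2 := (h.bound t ht (optExt b t B)).1
  have h3 := frobSq3_block_ge_col B (optCol b t B)
  have h4 : frobSq3 (symPart (optExt b t B)) ≤ CW * (CW * frobSq2 B) := by
    have := h2.trans h1
    rwa [one_div, inv_mul_le_iff₀ h.pos] at this
  have h5 : (1 / 2) * ∑ i, optCol b t B i ^ 2 ≤ CW * (CW * frobSq2 B) := h3.trans h4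
  linarith

/-! ### Measurability in `t` -/

lemma meas_b (h : IsFam CW Q b) (u v : M3) : Measurable fun t => b t u v := by
  have e : (fun t => b t u v) = fun t => (Q t (u + v) - Q t u - Q t v) / 2 := by
    funext t
    rw [h.eq, h.eq, h.eq, LinearMap.map_add₂, map_add, map_add, h.symm t v u]
    ring
  rw [e]
  exact (((h.meas _).sub (h.meas _)).sub (h.meas _)).div_const 2

lemma meas_b_comp (h : IsFam CW Q b) {F G : ℝ → M3} (hF : ∀ i j, Measurable fun t => F t i j)
    (hG : ∀ i j, Measurable fun t => G t i j) : Measurable fun t => b t (F t) (G t) := by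
  have e : (fun t => b t (F t) (G t)) = fun t => ∑ i, ∑ j, ∑ k, ∑ l,
      G t i j * (F t k l * b t (Matrix.single k l 1) (Matrix.single i j 1)) := by
    funext t
    conv_lhs => rw [Matrix.matrix_eq_sum_single (F t), Matrix.matrix_eq_sum_single (G t)]
    have hs : ∀ (i j : Fin 3) (c : ℝ),
        Matrix.single i j c = c • (Matrix.single i j (1 : ℝ) : M3) := by
      intro i j c; simp
    simp only [map_sum, LinearMap.sum_apply, hs _ _ (F t _ _), hs _ _ (G t _ _), map_smul,
      LinearMap.smul_apply, smul_eq_mul, Finset.mul_sum]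
  rw [e]
  refine Finset.measurable_sum _ fun i _ => Finset.measurable_sum _ fun j _ =>
    Finset.measurable_sum _ fun k _ => Finset.measurable_sum _ fun l _ => ?_
  exact (hG i j).mul ((hF k l).mul (h.meas_b _ _))

lemma meas_Q_comp (h : IsFam CW Q b) {G : ℝ → M3} (hG : ∀ i j, Measurable fun t => G t i j) :
    Measurable fun t => Q t (G t) := by
  simp only [h.eq]
  exact h.meas_b_comp hG hG

end IsFam

lemma meas_iotaL {F : ℝ → M2} (hF : ∀ i j, Measurable fun t => F t i j) (i j : Fin 3) :
    Measurable fun t => iotaL (F t) i j := by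
  fin_cases i <;> fin_cases j <;> simp [iotaL, iota, hF]

lemma meas_colMap {d : ℝ → Fin 3 → ℝ} (hd : ∀ i, Measurable fun t => d t i) (i j : Fin 3) :
    Measurable fun t => colMap (d t) i j := by
  have : ∀ t, colMap (d t) i j
      = (1 / 2) * ((if j = 2 then d t i else 0) + (if i = 2 then d t j else 0)) := by
    intro t; simp [colMap, symPart, tensorE3, mul_add]
  simp only [this]
  have h1 : Measurable fun t => if j = 2 then d t i else 0 := by
    split_ifs <;> simp [hd]
  have h2 : Measurable fun t => if i = 2 then d t j else 0 := by
    split_ifs <;> simp [hd]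
  exact (h1.add h2).const_mul _

namespace IsFam

lemma meas_gram_inv (h : IsFam CW Q b) (i j : Fin 3) :
    Measurable fun t => (colGram b t)⁻¹ i j := by
  have hg : ∀ i j, Measurable fun t => colGram b t i j := fun i j => h.meas_b _ _
  have hdet : ∀ M : ℝ → M3, (∀ i j, Measurable fun t => M t i j) →
      Measurable fun t => (M t).det := by
    intro M hM
    simp only [Matrix.det_apply']
    refine Finset.measurable_sum _ fun σ _ => Measurable.const_mul ?_ _
    exact Finset.measurable_prod _ fun i _ => hM _ _
  have e : (fun t => (colGram b t)⁻¹ i j)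
      = fun t => ((colGram b t).det)⁻¹ * (colGram b t).adjugate i j := by
    funext t
    rw [Matrix.inv_def, Ring.inverse_eq_inv']
    rfl
  rw [e]
  refine (hdet _ hg).inv.mul ?_
  simp only [Matrix.adjugate_apply]
  refine hdet _ fun k l => ?_
  simp only [Matrix.updateRow_apply]
  split_ifs
  · exact measurable_const
  · exact hg _ _

lemma meas_optCol (h : IsFam CW Q b) {F : ℝ → M2} (hF : ∀ i j, Measurable fun t => F t i j)
    (i : Fin 3) : Measurable fun t => optCol b t (F t) i := by
  have e : (fun t => optCol b t (F t) i) = fun t => -∑ j, (colGram b t)⁻¹ i j *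
      b t (colMap (Pi.single j 1)) (iotaL (F t)) := by
    funext t; simp [optCol, Matrix.mulVec, dotProduct]
  rw [e]
  refine (Finset.measurable_sum _ fun j _ => (h.meas_gram_inv i j).mul ?_).neg
  exact h.meas_b_comp (fun _ _ => measurable_const) (meas_iotaL hF)

lemma meas_optExt (h : IsFam CW Q b) {F : ℝ → M2} (hF : ∀ i j, Measurable fun t => F t i j)
    (i j : Fin 3) : Measurable fun t => optExt b t (F t) i j :=
  (meas_iotaL hF i j).add (meas_colMap (h.meas_optCol hF) i j)

end IsFam

/-! ### The energy as a quadratic form on in-plane strain profiles -/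

/-- The in-plane strain profile `t ↦ t·A + M + 𝟙(t>0)·S` with parameters `x = (A, M, S)`. -/
def profile (t : ℝ) : M2 × M2 × M2 →ₗ[ℝ] M2 where
  toFun x := t • x.1 + x.2.1 + (if 0 < t then (1 : ℝ) else 0) • x.2.2
  map_add' x y := by simp only [Prod.fst_add, Prod.snd_add, smul_add]; abel
  map_smul' c x := by
    simp only [Prod.smul_fst, Prod.smul_snd, smul_add, RingHom.id_apply, smul_comm c]

lemma profile_apply (t : ℝ) (x : M2 × M2 × M2) :
    profile t x = t • x.1 + x.2.1 + (if 0 < t then (1 : ℝ) else 0) • x.2.2 := rfl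

lemma meas_profile (x : M2 × M2 × M2) (i j : Fin 2) : Measurable fun t => profile t x i j := by
  have hi : Measurable fun t : ℝ => if 0 < t then (1 : ℝ) else 0 :=
    Measurable.ite measurableSet_Ioi measurable_const measurable_const
  simp only [profile_apply, Matrix.add_apply, Matrix.smul_apply, smul_eq_mul]
  exact ((measurable_id.mul_const _).add_const _).add (hi.mul_const _)

lemma profile_bound {t : ℝ} (ht : t ∈ Set.Ioo (-(1 : ℝ) / 2) (1 / 2)) (x : M2 × M2 × M2) :
    frobSq2 (profile t x) ≤ 3 * (frobSq2 x.1 + frobSq2 x.2.1 + frobSq2 x.2.2) := by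
  have key : ∀ i j, profile t x i j ^ 2
      ≤ 3 * (x.1 i j ^ 2 + x.2.1 i j ^ 2 + x.2.2 i j ^ 2) := by
    intro i j
    simp only [profile_apply, Matrix.add_apply, Matrix.smul_apply, smul_eq_mul]
    set e : ℝ := if 0 < t then (1 : ℝ) else 0 with he
    have ht2 : t ^ 2 ≤ 1 := by nlinarith [ht.1, ht.2]
    have he2 : e ^ 2 ≤ 1 := by rw [he]; split_ifs <;> norm_num
    have h1 : (t * x.1 i j) ^ 2 ≤ x.1 i j ^ 2 := by
      rw [mul_pow]; exact mul_le_of_le_one_left (sq_nonneg _) ht2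
    have h2 : (e * x.2.2 i j) ^ 2 ≤ x.2.2 i j ^ 2 := by
      rw [mul_pow]; exact mul_le_of_le_one_left (sq_nonneg _) he2
    nlinarith [sq_nonneg (t * x.1 i j - x.2.1 i j), sq_nonneg (t * x.1 i j - e * x.2.2 i j),
      sq_nonneg (x.2.1 i j - e * x.2.2 i j)]
  simp only [frobSq2, Fin.sum_univ_two]
  linarith [key 0 0, key 0 1, key 1 0, key 1 1]

namespace IsFam

lemma integrable_opt (h : IsFam CW Q b) (x : M2 × M2 × M2) :
    IntegrableOn (fun t => Q t (optExt b t (profile t x))) (Set.Ioo (-(1 : ℝ) / 2) (1 / 2)) := by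
  refine Measure.integrableOn_of_bounded
    (M := CW * (3 * (frobSq2 x.1 + frobSq2 x.2.1 + frobSq2 x.2.2))) (by simp) ?_ ?_
  · exact (h.meas_Q_comp (h.meas_optExt (meas_profile x))).aestronglyMeasurable
  · refine (ae_restrict_iff' measurableSet_Ioo).2 (Eventually.of_forall fun t ht => ?_)
    rw [Real.norm_of_nonneg (h.nonneg ht _)]
    exact (h.opt_upper ht _).trans (mul_le_mul_of_nonneg_left (profile_bound ht x) h.pos.le)

lemma integrable_b (h : IsFam CW Q b) (x y : M2 × M2 × M2) :
    IntegrableOn (fun t => b t (optExt b t (profile t x)) (optExt b t (profile t y)))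
      (Set.Ioo (-(1 : ℝ) / 2) (1 / 2)) := by
  have e : (fun t => b t (optExt b t (profile t x)) (optExt b t (profile t y)))
      = fun t => (Q t (optExt b t (profile t (x + y))) - Q t (optExt b t (profile t x))
        - Q t (optExt b t (profile t y))) / 2 := by
    funext t
    rw [map_add, map_add, h.eq, h.eq, h.eq, LinearMap.map_add₂, map_add, map_add,
      h.symm t (optExt b t (profile t y))]
    ring
  rw [e]
  exact (((h.integrable_opt _).sub (h.integrable_opt _)).sub (h.integrable_opt _)).div_const 2

/-- The polar form of the energy `x ↦ ∫ Q₂(t, t·A + M + 𝟙(t>0)·S) dt`, `x = (A, M, S)`. -/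
def energy (h : IsFam CW Q b) : M2 × M2 × M2 →ₗ[ℝ] M2 × M2 × M2 →ₗ[ℝ] ℝ :=
  LinearMap.mk₂ ℝ (fun x y => ∫ t in Set.Ioo (-(1 : ℝ) / 2) (1 / 2),
      b t (optExt b t (profile t x)) (optExt b t (profile t y)))
    (fun x y z => by
      rw [← integral_add (h.integrable_b x z) (h.integrable_b y z)]
      simp only [map_add, LinearMap.add_apply])
    (fun c x y => by
      rw [smul_eq_mul, ← integral_const_mul]
      simp only [map_smul, LinearMap.smul_apply, smul_eq_mul])
    (fun x y z => by
      rw [← integral_add (h.integrable_b x y) (h.integrable_b x z)]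
      simp only [map_add])
    (fun c x y => by
      rw [smul_eq_mul, ← integral_const_mul]
      simp only [map_smul, smul_eq_mul])

lemma energy_symm (h : IsFam CW Q b) (x y : M2 × M2 × M2) : h.energy x y = h.energy y x := by
  simp only [energy, LinearMap.mk₂_apply]
  simp only [fun t => h.symm t (optExt b t (profile t x))]

lemma energy_self (h : IsFam CW Q b) (x : M2 × M2 × M2) :
    h.energy x x = ∫ t in Set.Ioo (-(1 : ℝ) / 2) (1 / 2), Q t (optExt b t (profile t x)) := by
  simp only [energy, LinearMap.mk₂_apply, h.eq]

lemma energy_eq_Q2 (h : IsFam CW Q b) (x : M2 × M2 × M2) :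
    h.energy x x = ∫ t in Set.Ioo (-(1 : ℝ) / 2) (1 / 2), Q2fam Q t (profile t x) := by
  rw [h.energy_self]
  exact setIntegral_congr_fun measurableSet_Ioo fun t ht => (h.Q2_eq ht _).symm

lemma energy_nonneg (h : IsFam CW Q b) (x : M2 × M2 × M2) : 0 ≤ h.energy x x := by
  rw [h.energy_self]
  exact setIntegral_nonneg measurableSet_Ioo fun t ht => h.nonneg ht _

lemma energy_add (h : IsFam CW Q b) (x y : M2 × M2 × M2) :
    h.energy (x + y) (x + y) = h.energy x x + 2 * h.energy x y + h.energy y y := by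
  rw [LinearMap.map_add₂, map_add, map_add, h.energy_symm y x]
  ring

lemma energy_smul (h : IsFam CW Q b) (c : ℝ) (x : M2 × M2 × M2) :
    h.energy (c • x) (c • x) = c ^ 2 * h.energy x x := by
  rw [LinearMap.map_smul₂, map_smul, smul_eq_mul, smul_eq_mul]
  ring

/-- The energy is positive definite on constant symmetric profiles. -/
lemma energy_const (h : IsFam CW Q b) (M : M2) (hM : M.IsSymm)
    (h0 : h.energy (0, M, 0) (0, M, 0) = 0) : M = 0 := by
  have h1 : ∫ _t in Set.Ioo (-(1 : ℝ) / 2) (1 / 2), (1 / CW) * frobSq2 M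
      ≤ h.energy (0, M, 0) (0, M, 0) := by
    rw [h.energy_self]
    refine setIntegral_mono_on (integrableOn_const (by simp)) (h.integrable_opt _) measurableSet_Ioo fun t ht => ?_
    have : profile t (0, M, 0) = M := by simp [profile_apply]
    rw [this]
    exact h.opt_lower ht M hM
  rw [h0, setIntegral_const] at h1
  have h2 : (volume.real (Set.Ioo (-(1 : ℝ) / 2) (1 / 2))) = 1 := by
    rw [Real.volume_real_Ioo_of_le (by norm_num)]; norm_num
  rw [h2, one_smul] at h1
  apply eq_zero_of_frobSq2
  by_contra hc
  exact absurd h1 (not_le.2 (mul_pos (one_div_pos.2 h.pos) (not_le.1 hc)))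

end IsFam

/-- The space of symmetric 2×2 matrices. -/
def symSpace : Submodule ℝ M2 where
  carrier := {M | M.IsSymm}
  add_mem' := fun {_ _} ha hb => Matrix.IsSymm.add ha hb
  zero_mem' := Matrix.isSymm_zero
  smul_mem' := fun c _ ha => Matrix.IsSymm.smul ha c

namespace IsFam

/-- For each linear part `A` an optimal constant part exists: the normal equations are solvable
since the energy is positive definite on the finite-dimensional space of constant profiles. -/
lemma exists_opt_const (h : IsFam CW Q b) (A : M2) :
    ∃ M : M2, M.IsSymm ∧ ∀ M' : M2, M'.IsSymm → h.energy (A, M, 0) (0, M', 0) = 0 := by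
  let j : symSpace →ₗ[ℝ] M2 × M2 × M2 :=
    LinearMap.inr ℝ M2 (M2 × M2) ∘ₗ LinearMap.inl ℝ M2 M2 ∘ₗ symSpace.subtype
  let T : symSpace →ₗ[ℝ] Module.Dual ℝ symSpace := h.energy.compl₁₂ j j
  have hinj : Function.Injective T := by
    rw [injective_iff_map_eq_zero]
    intro M hM
    have : T M M = 0 := by rw [hM]; rfl
    exact Subtype.ext (h.energy_const M.1 M.2 this)
  have hsurj : Function.Surjective T :=
    (LinearMap.injective_iff_surjective_of_finrank_eq_finrank
      (Subspace.dual_finrank_eq (K := ℝ) (V := symSpace)).symm).1 hinj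
  obtain ⟨M, hM⟩ := hsurj (-(h.energy (A, 0, 0) ∘ₗ j))
  refine ⟨M.1, M.2, fun M' hM' => ?_⟩
  have h1 := LinearMap.congr_fun hM ⟨M', hM'⟩
  have h2 : h.energy (0, M.1, 0) (0, M', 0) = -h.energy (A, 0, 0) (0, M', 0) := h1
  have e : ((A, M.1, 0) : M2 × M2 × M2) = (A, 0, 0) + (0, M.1, 0) := by simp
  rw [e, map_add, LinearMap.add_apply, h2]
  ring

/-- First-order condition: a point minimizing the energy along the line of direction `w` is
orthogonal to `w`. -/
lemma orth_of_min (h : IsFam CW Q b) (R w : M2 × M2 × M2)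
    (hR : ∀ s : ℝ, h.energy R R ≤ h.energy (R + s • w) (R + s • w)) : h.energy R w = 0 := by
  set β := h.energy R w with hβ
  set q := h.energy w w with hq
  have hq0 : 0 ≤ q := h.energy_nonneg w
  have h1 := hR (-(β / (q + 1)))
  rw [h.energy_add, h.energy_smul, map_smul, smul_eq_mul, ← hβ, ← hq] at h1
  have h2 : 0 ≤ 2 * (-(β / (q + 1)) * β) + (-(β / (q + 1))) ^ 2 * q := by linarith
  have h3 : 2 * (-(β / (q + 1)) * β) + (-(β / (q + 1))) ^ 2 * q
      = -(β ^ 2 * (q + 2)) / (q + 1) ^ 2 := by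
    field_simp; ring
  rw [h3] at h2
  by_contra hne
  have h4 : 0 < β ^ 2 * (q + 2) := by positivity
  have h5 : -(β ^ 2 * (q + 2)) / (q + 1) ^ 2 < 0 :=
    div_neg_of_neg_of_pos (by linarith) (by positivity)
  linarith

end IsFam

end Relaxation

/-- relaxation formula: the infimum over symmetric `M` and square-integrable
measurable `d : (−1/2,1/2) → ℝ³` of
`∫ Q(t, ι(t·A+M) + 𝟙(t>0)·(r̄/2)·U + sym(d(t)⊗e₃)) dt` equals
`Q_el(A + Â) + r̄²·E_res(U')`, where `(Â, M̂)` is the unique minimizer of the functional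
`(A',M') ↦ ∫ Q₂(t, 𝟙(t>0)·(r̄/2)·U' − (t·A'+M')) dt`, and the infimum is attained. -/
theorem statement10 (CW : ℝ) (hCW : 0 < CW) (Q : ℝ → M3 → ℝ)
    (hquad : ∀ t, ∃ b : M3 →ₗ[ℝ] M3 →ₗ[ℝ] ℝ, (∀ u v, b u v = b v u) ∧ ∀ G, Q t G = b G G)
    (hmeas : ∀ G, Measurable fun t => Q t G)
    (hbound : ∀ t ∈ Set.Ioo (-(1 : ℝ) / 2) (1 / 2), ∀ G : M3,
      (1 / CW) * frobSq3 (symPart G) ≤ Q t G ∧ Q t G ≤ CW * frobSq3 (symPart G))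
    (rbar : ℝ) (A : M2) (hA : A.IsSymm) (U : M3) (hU : U.IsSymm)
    (Ahat Mhat : M2) (hAhatSymm : Ahat.IsSymm) (hMhatSymm : Mhat.IsSymm)
    (hmin : ∀ A' M' : M2, A'.IsSymm → M'.IsSymm →
      (∫ t in Set.Ioo (-(1 : ℝ) / 2) (1 / 2),
          Q2fam Q t
            ((if 0 < t then (1 : ℝ) else 0) • ((rbar / 2) • upLeft U) - (t • Ahat + Mhat)))
        ≤ ∫ t in Set.Ioo (-(1 : ℝ) / 2) (1 / 2),
            Q2fam Q t
              ((if 0 < t then (1 : ℝ) else 0) • ((rbar / 2) • upLeft U) - (t • A' + M')))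
    (huniq : ∀ A' M' : M2, A'.IsSymm → M'.IsSymm →
      (∀ A'' M'' : M2, A''.IsSymm → M''.IsSymm →
        (∫ t in Set.Ioo (-(1 : ℝ) / 2) (1 / 2),
            Q2fam Q t
              ((if 0 < t then (1 : ℝ) else 0) • ((rbar / 2) • upLeft U) - (t • A' + M')))
          ≤ ∫ t in Set.Ioo (-(1 : ℝ) / 2) (1 / 2),
              Q2fam Q t
                ((if 0 < t then (1 : ℝ) else 0) • ((rbar / 2) • upLeft U)
                  - (t • A'' + M''))) →
      A' = Ahat ∧ M' = Mhat) :
    IsLeast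
      { v : ℝ | ∃ (M : M2) (d : ℝ → Fin 3 → ℝ), M.IsSymm ∧ Measurable d ∧
          (∫⁻ t in Set.Ioo (-(1 : ℝ) / 2) (1 / 2),
              ENNReal.ofReal (∑ i, (d t i) ^ 2)) < ⊤ ∧
          v = ∫ t in Set.Ioo (-(1 : ℝ) / 2) (1 / 2),
                Q t (iota (t • A + M) + (if 0 < t then (1 : ℝ) else 0) • ((rbar / 2) • U)
                  + symPart (tensorE3 (d t))) }
      (Qel Q (A + Ahat) + rbar ^ 2 * Eres Q (upLeft U)) := by
  choose b hbs hbq using hquad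
  have h : IsFam CW Q b := ⟨hCW, hbs, hbq, hmeas, hbound⟩
  set U' := upLeft U with hU'
  set S : M2 := (rbar / 2) • U' with hS
  have hprof : ∀ (A' M' : M2) (t : ℝ),
      (if 0 < t then (1 : ℝ) else 0) • S - (t • A' + M') = profile t (-A', -M', S) := by
    intro A' M' t
    simp only [profile_apply, smul_neg]; abel
  set R : M2 × M2 × M2 := (-Ahat, -Mhat, S) with hR
  have hRmin : ∀ A' M' : M2, A'.IsSymm → M'.IsSymm →
      h.energy R R ≤ h.energy (A', M', S) (A', M', S) := by
    intro A' M' hA' hM'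
    have := hmin (-A') (-M') hA'.neg hM'.neg
    simp only [hprof, neg_neg] at this
    rwa [← h.energy_eq_Q2, ← h.energy_eq_Q2] at this
  have hRorth : ∀ A' M' : M2, A'.IsSymm → M'.IsSymm → h.energy R (A', M', 0) = 0 := by
    intro A' M' hA' hM'
    refine h.orth_of_min R _ fun s => ?_
    have e : R + s • ((A', M', 0) : M2 × M2 × M2) = (-Ahat + s • A', -Mhat + s • M', S) := by
      simp [hR]
    rw [e]
    exact hRmin _ _ (hAhatSymm.neg.add (hA'.smul s)) (hMhatSymm.neg.add (hM'.smul s))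
  obtain ⟨Ms, hMs, hMsorth⟩ := h.exists_opt_const (A + Ahat)
  have hMsmin : ∀ M : M2, M.IsSymm → h.energy (A + Ahat, Ms, 0) (A + Ahat, Ms, 0)
      ≤ h.energy (A + Ahat, M, 0) (A + Ahat, M, 0) := by
    intro M hM
    have e : ((A + Ahat, M, 0) : M2 × M2 × M2) = (A + Ahat, Ms, 0) + (0, M - Ms, 0) := by simp
    rw [e, h.energy_add, hMsorth _ (hM.sub hMs)]
    linarith [h.energy_nonneg (0, M - Ms, 0)]
  have hQel : Qel Q (A + Ahat) = h.energy (A + Ahat, Ms, 0) (A + Ahat, Ms, 0) := by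
    have e : Qel Q (A + Ahat) = ⨅ M : {M : M2 // M.IsSymm},
        h.energy (A + Ahat, M.1, 0) (A + Ahat, M.1, 0) := by
      unfold Qel
      refine iInf_congr fun M => ?_
      rw [h.energy_eq_Q2]
      simp [profile_apply]
    rw [e]
    apply le_antisymm
    · exact ciInf_le (f := fun M : {M : M2 // M.IsSymm} =>
        h.energy (A + Ahat, M.1, 0) (A + Ahat, M.1, 0))
        ⟨0, by rintro _ ⟨M, rfl⟩; exact h.energy_nonneg _⟩ ⟨Ms, hMs⟩
    · have : Nonempty {M : M2 // M.IsSymm} := ⟨⟨Ms, hMs⟩⟩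
      exact le_ciInf fun M => hMsmin M.1 M.2
  have hEres : rbar ^ 2 * Eres Q U' = h.energy R R := by
    by_cases hr : rbar = 0
    · -- here the step vanishes and the zero profile is admissible in the minimization
      have hS0 : S = 0 := by simp [hS, hr]
      have h1 := hRmin 0 0 Matrix.isSymm_zero Matrix.isSymm_zero
      have e : ((0, 0, S) : M2 × M2 × M2) = 0 := by rw [hS0]; rfl
      rw [e, map_zero] at h1
      rw [hr, le_antisymm h1 (h.energy_nonneg R)]
      ring
    · have hr2 : 0 < rbar ^ 2 := by positivity
      have hsc : ∀ A' M' : M2,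
          h.energy (rbar • A', rbar • M', S) (rbar • A', rbar • M', S)
          = rbar ^ 2 * h.energy (A', M', (1 / 2 : ℝ) • U') (A', M', (1 / 2 : ℝ) • U') := by
        intro A' M'
        have e : ((rbar • A', rbar • M', S) : M2 × M2 × M2)
            = rbar • (A', M', (1 / 2 : ℝ) • U') := by
          simp only [Prod.smul_mk, smul_smul, hS]
          rw [mul_one_div]
        rw [e, h.energy_smul]
      have e : Eres Q U' = ⨅ p : {M : M2 // M.IsSymm} × {M : M2 // M.IsSymm},
          h.energy (p.1.1, p.2.1, (1 / 2 : ℝ) • U') (p.1.1, p.2.1, (1 / 2 : ℝ) • U') := by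
        unfold Eres
        refine iInf_congr fun p => ?_
        rw [h.energy_eq_Q2]
        simp only [profile_apply]
      rw [e]
      let p0 : {M : M2 // M.IsSymm} × {M : M2 // M.IsSymm} :=
        (⟨rbar⁻¹ • (-Ahat), hAhatSymm.neg.smul _⟩, ⟨rbar⁻¹ • (-Mhat), hMhatSymm.neg.smul _⟩)
      have hp0 : rbar ^ 2 * h.energy (p0.1.1, p0.2.1, (1 / 2 : ℝ) • U')
          (p0.1.1, p0.2.1, (1 / 2 : ℝ) • U') = h.energy R R := by
        rw [← hsc]
        simp only [p0, smul_inv_smul₀ hr, hR]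
      have : Nonempty ({M : M2 // M.IsSymm} × {M : M2 // M.IsSymm}) := ⟨p0⟩
      apply le_antisymm
      · rw [← hp0]
        refine mul_le_mul_of_nonneg_left ?_ hr2.le
        exact ciInf_le (f := fun p : {M : M2 // M.IsSymm} × {M : M2 // M.IsSymm} =>
          h.energy (p.1.1, p.2.1, (1 / 2 : ℝ) • U') (p.1.1, p.2.1, (1 / 2 : ℝ) • U'))
          ⟨0, by rintro _ ⟨M, rfl⟩; exact h.energy_nonneg _⟩ p0
      · rw [mul_comm, ← div_le_iff₀ hr2]
        refine le_ciInf fun p => ?_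
        rw [div_le_iff₀ hr2, mul_comm, ← hsc]
        exact hRmin _ _ (p.1.2.smul _) (p.2.2.smul _)
  -- Pythagoras: the residual `R` is orthogonal to all affine symmetric profiles
  have hsplit : ∀ M : M2, M.IsSymm → h.energy (A, M, S) (A, M, S)
      = h.energy (A + Ahat, M + Mhat, 0) (A + Ahat, M + Mhat, 0) + h.energy R R := by
    intro M hM
    have e : ((A, M, S) : M2 × M2 × M2) = R + (A + Ahat, M + Mhat, 0) := by simp [hR]
    rw [e, h.energy_add, hRorth _ _ (hA.add hAhatSymm) (hM.add hMhatSymm)]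
    ring
  -- the off-plane part of `U` is absorbed into the free third column
  set shift : ℝ → Fin 3 → ℝ :=
    fun t => (if 0 < t then (1 : ℝ) else 0) • ((rbar / 2) • lastCol U) with hshift
  have hform : ∀ (M : M2) (t : ℝ) (d : Fin 3 → ℝ),
      iota (t • A + M) + (if 0 < t then (1 : ℝ) else 0) • ((rbar / 2) • U)
        + symPart (tensorE3 d)
      = iotaL (profile t (A, M, S)) + colMap (d + shift t) := by
    intro M t d
    have e1 : iota (t • A + M) = iotaL (t • A + M) := rfl
    have e2 : symPart (tensorE3 d) = colMap d := rfl
    rw [e1, e2]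
    conv_lhs => rw [symm_block U hU]
    simp only [profile_apply, hshift, map_add, map_smul, smul_add, hS, ← hU']
    abel
  have hshift_meas : ∀ i, Measurable fun t => shift t i := by
    intro i
    have hi : Measurable fun t : ℝ => if 0 < t then (1 : ℝ) else 0 :=
      Measurable.ite measurableSet_Ioi measurable_const measurable_const
    simp only [hshift, Pi.smul_apply, smul_eq_mul]
    exact hi.mul_const _
  have hshift_bound : ∀ t, ∑ i, shift t i ^ 2 ≤ ∑ i, ((rbar / 2) • lastCol U) i ^ 2 := by
    intro t
    refine Finset.sum_le_sum fun i _ => ?_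
    simp only [hshift]
    split_ifs
    · simp
    · rw [zero_smul, Pi.zero_apply, zero_pow two_ne_zero]; exact sq_nonneg _
  have hsq : ∀ u v : Fin 3 → ℝ,
      ∑ i, (u i + v i) ^ 2 ≤ 2 * ∑ i, u i ^ 2 + 2 * ∑ i, v i ^ 2 := by
    intro u v
    rw [Finset.mul_sum, Finset.mul_sum, ← Finset.sum_add_distrib]
    exact Finset.sum_le_sum fun i _ => by nlinarith [sq_nonneg (u i - v i)]
  rw [hQel, hEres]
  constructor
  · have hMM : (Ms - Mhat).IsSymm := hMs.sub hMhatSymm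
    set x : M2 × M2 × M2 := (A, Ms - Mhat, S) with hx
    refine ⟨Ms - Mhat, fun t => optCol b t (profile t x) - shift t, hMM, ?_, ?_, ?_⟩
    · exact measurable_pi_iff.2 fun i => (h.meas_optCol (meas_profile x) i).sub (hshift_meas i)
    · set C : ℝ := 2 * (2 * CW ^ 2 * (3 * (frobSq2 x.1 + frobSq2 x.2.1 + frobSq2 x.2.2)))
        + 2 * ∑ i, ((rbar / 2) • lastCol U) i ^ 2 with hC
      refine lt_of_le_of_lt (setLIntegral_mono' (g := fun _ => ENNReal.ofReal C)
        measurableSet_Ioo fun t ht => ENNReal.ofReal_le_ofReal ?_) ?_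
      · have h1 := hsq (optCol b t (profile t x)) (-shift t)
        have h2 := h.optCol_bound ht (profile t x)
        have h3 := mul_le_mul_of_nonneg_left (profile_bound ht x)
          (by positivity : (0 : ℝ) ≤ 2 * CW ^ 2)
        have h4 := hshift_bound t
        simp only [Pi.neg_apply, neg_sq] at h1
        simp only [Pi.sub_apply, sub_eq_add_neg]
        linarith
      · rw [setLIntegral_const]
        exact ENNReal.mul_lt_top ENNReal.ofReal_lt_top (by simp)
    · have e := hsplit (Ms - Mhat) hMM
      rw [sub_add_cancel] at e
      rw [← e, h.energy_self]
      refine setIntegral_congr_fun measurableSet_Ioo fun t _ => ?_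
      simp only [hform, sub_add_cancel]
      rfl
  · rintro v ⟨M, d, hM, hd, hd2, rfl⟩
    have h1 := hMsmin (M + Mhat) (hM.add hMhatSymm)
    have h2 := hsplit M hM
    refine (add_le_add_left h1 _).trans ?_
    rw [← h2, h.energy_self]
    simp only [hform]
    have hdi : ∀ i, Measurable fun t => d t i := measurable_pi_iff.1 hd
    have hdint : IntegrableOn (fun t => ∑ i, d t i ^ 2) (Set.Ioo (-(1 : ℝ) / 2) (1 / 2)) := by
      have hm : Measurable fun t => ∑ i, d t i ^ 2 :=
        Finset.measurable_sum _ fun i _ => (hdi i).pow_const 2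
      exact (lintegral_ofReal_ne_top_iff_integrable hm.aestronglyMeasurable
        (Eventually.of_forall fun t => Finset.sum_nonneg fun _ _ => sq_nonneg _)).1 hd2.ne
    refine setIntegral_mono_on (h.integrable_opt _) ?_ measurableSet_Ioo
      fun t ht => h.opt_le ht _ _
    set x : M2 × M2 × M2 := (A, M, S) with hx
    set C : ℝ := 3 * (frobSq2 x.1 + frobSq2 x.2.1 + frobSq2 x.2.2)
      + 2 * ∑ i, ((rbar / 2) • lastCol U) i ^ 2 with hC
    have hg : IntegrableOn (fun t => CW * (2 * ∑ i, d t i ^ 2 + C))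
        (Set.Ioo (-(1 : ℝ) / 2) (1 / 2)) :=
      ((hdint.const_mul 2).add (integrableOn_const (by simp))).const_mul CW
    refine Integrable.mono' hg ?_ ?_
    · refine (h.meas_Q_comp fun i j => ?_).aestronglyMeasurable
      exact (meas_iotaL (meas_profile x) i j).add
        (meas_colMap (fun k => (hdi k).add (hshift_meas k)) i j)
    · refine (ae_restrict_iff' measurableSet_Ioo).2 (Eventually.of_forall fun t ht => ?_)
      rw [Real.norm_of_nonneg (h.nonneg ht _)]
      refine (h.bound t ht _).2.trans (mul_le_mul_of_nonneg_left ?_ hCW.le)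
      have h3 := frobSq3_block_le (profile t x) (d t + shift t)
      have h4 := hsq (d t) (shift t)
      have h5 := profile_bound ht x
      have h6 := hshift_bound t
      simp only [Pi.add_apply] at h3
      linarith
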